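/- In the setting where each f_i : ℝ^d → ℝ is convex with L_i-Lipschitz gradient, L = max_i L_i, the h_i are all equal to a single proper, closed, convex h, W is symmetric nonnegative stochastic with ‖Wv‖ ≤ β‖v‖ for all v ⟂ 𝟙 (β ∈ [0,1)), α > 0, and the consensus problem min_z Σ_i (f_i(z) + h(z)) has optimal value F_opt: if x* both minimizes x ↦ F(x) + (1/(2α))⟨x,(I − 𝐖)x⟩ (so that F(x*) ≤ F_opt) and satisfies the fixed-point equations x*_i = prox_{αh}(Σ_j w_{ij}x*_j − α∇f_i(x*_i)) for all i, then F(𝐱̄*) ≤ F_opt + ( α/(1−β) + Lα²/(2(1−β)²) )·‖g*‖², where F(x) = Σ_i (f_i(x_i) + h(x_i)), g* = (∇f_1(x*_1),…,∇f_n(x*_n)), x̄* = (1/n)Σ_i x*_i, and 𝐱̄* = (x̄*,…,x̄*). -/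

import Mathlib

open scoped RealInnerProductSpace

/-- A function `h : ℝ^d → ℝ ∪ {+∞}` (modeled as `EReal`-valued, never `⊥`) is proper,
closed (lower semicontinuous), and convex. -/
def ProperClosedConvex {d : ℕ} (h : EuclideanSpace ℝ (Fin d) → EReal) : Prop :=
  (∃ x, h x ≠ ⊤) ∧ (∀ x, h x ≠ ⊥) ∧ LowerSemicontinuous h ∧
    ∀ x y : EuclideanSpace ℝ (Fin d), ∀ t : ℝ, 0 ≤ t → t ≤ 1 →
      h (t • x + (1 - t) • y) ≤ (t : EReal) * h x + ((1 - t : ℝ) : EReal) * h y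

/-- `IsProxPt α h u p` says `p` minimizes `y ↦ α·h(y) + ½‖y − u‖²`, i.e.
`p = prox_{αh}(u)`. -/
def IsProxPt {d : ℕ} (α : ℝ) (h : EuclideanSpace ℝ (Fin d) → EReal)
    (u p : EuclideanSpace ℝ (Fin d)) : Prop :=
  ∀ y, (α : EReal) * h p + ((1 / 2 * ‖p - u‖ ^ 2 : ℝ) : EReal)
      ≤ (α : EReal) * h y + ((1 / 2 * ‖y - u‖ ^ 2 : ℝ) : EReal)

/-!
Put `e i = x i - x̄` and `κ = α / (1 - β)`. Each fixed-point equation gives a variational inequality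
for `prox`; testing it at `x̄` and summing, the terms in `h` drop out by Jensen's inequality,
leaving `⟨e, (I - W) e⟩ ≤ -α ∑ ⟪∇fᵢ(xᵢ), eᵢ⟫`. As `e` has mean zero, the left side is at least
`(1 - β) ‖e‖²`, so Young's inequality yields `-∑ ⟪∇fᵢ(xᵢ), eᵢ⟫ ≤ κ ‖g‖²` and `‖e‖² ≤ κ² ‖g‖²`.
These are the first- and second-order terms of the descent lemma from `xᵢ` to `x̄`, and
`F(x) ≤ F(z, …, z)` because the penalty is nonnegative and vanishes at consensus.
-/

theorem nonneg_of_norm_sub_le_mul {E F : Type*} [NormedAddCommGroup E] [Nontrivial E]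
    [SeminormedAddCommGroup F] {φ : E → F} {L : ℝ}
    (hlip : ∀ x y, ‖φ x - φ y‖ ≤ L * ‖x - y‖) : 0 ≤ L := by
  obtain ⟨x, y, hxy⟩ := exists_pair_ne E
  exact nonneg_of_mul_nonneg_left ((norm_nonneg _).trans (hlip x y)) (norm_sub_pos_iff.2 hxy)

section Descent

variable {E : Type*} [NormedAddCommGroup E] [InnerProductSpace ℝ E] [CompleteSpace E]

theorem hasDerivAt_comp_add_smul {f : E → ℝ} {f' : E → E}
    (hgrad : ∀ x, HasGradientAt f (f' x) x) (x v : E) (t : ℝ) :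
    HasDerivAt (fun s : ℝ => f (x + s • v)) ⟪f' (x + t • v), v⟫ t := by
  have hline : HasDerivAt (fun s : ℝ => x + s • v) v t := by
    simpa using ((hasDerivAt_id t).smul_const v).const_add x
  simpa using! (hgrad (x + t • v)).hasFDerivAt.comp_hasDerivAt t hline

theorem le_add_inner_add_norm_sq_of_lipschitz_gradient {f : E → ℝ} {f' : E → E} {L : ℝ}
    (hgrad : ∀ x, HasGradientAt f (f' x) x)
    (hlip : ∀ x y, ‖f' x - f' y‖ ≤ L * ‖x - y‖) (x y : E) :
    f y ≤ f x + ⟪f' x, y - x⟫ + L / 2 * ‖y - x‖ ^ 2 := by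
  set v := y - x with hv
  have hf := hasDerivAt_comp_add_smul hgrad x v
  have hB : ∀ t : ℝ, HasDerivAt (fun s => f x + s * ⟪f' x, v⟫ + L / 2 * ‖v‖ ^ 2 * s ^ 2)
      (⟪f' x, v⟫ + L * t * ‖v‖ ^ 2) t := fun t => by
    refine (((hasDerivAt_mul_const _).const_add _).add
      ((hasDerivAt_pow 2 t).const_mul _)).congr_deriv ?_
    simp only [Nat.cast_ofNat, Nat.add_one_sub_one, pow_one]
    ring
  have hslope : ∀ t ∈ Set.Ico (0 : ℝ) 1,
      ⟪f' (x + t • v), v⟫ ≤ ⟪f' x, v⟫ + L * t * ‖v‖ ^ 2 := fun t ht => by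
    rw [← sub_le_iff_le_add', ← inner_sub_left]
    calc ⟪f' (x + t • v) - f' x, v⟫ ≤ ‖f' (x + t • v) - f' x‖ * ‖v‖ := real_inner_le_norm _ _
      _ ≤ L * ‖x + t • v - x‖ * ‖v‖ := by gcongr; exact hlip _ _
      _ = L * t * ‖v‖ ^ 2 := by
        rw [add_sub_cancel_left, norm_smul, Real.norm_of_nonneg ht.1]; ring
  have hle := image_le_of_deriv_right_le_deriv_boundary
    (fun t _ => (hf t).continuousAt.continuousWithinAt) (fun t _ => (hf t).hasDerivWithinAt)
    (by simp) (fun t _ => (hB t).continuousAt.continuousWithinAt)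
    (fun t _ => (hB t).hasDerivWithinAt) hslope (Set.right_mem_Icc.2 zero_le_one)
  simpa [hv] using hle

theorem sum_le_sub_sum_inner_add_sum_norm_sq {ι : Type*} [Fintype ι] {f : ι → E → ℝ}
    {f' : ι → E → E} {L : ℝ} (hgrad : ∀ i x, HasGradientAt (f i) (f' i x) x)
    (hlip : ∀ i x y, ‖f' i x - f' i y‖ ≤ L * ‖x - y‖) (x : ι → E) (c : E) :
    ∑ i, f i c ≤
      ∑ i, f i (x i) - ∑ i, ⟪f' i (x i), x i - c⟫ + L / 2 * ∑ i, ‖x i - c‖ ^ 2 := by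
  rw [Finset.mul_sum, ← Finset.sum_sub_distrib, ← Finset.sum_add_distrib]
  refine Finset.sum_le_sum fun i _ => ?_
  have hi := le_add_inner_add_norm_sq_of_lipschitz_gradient (hgrad i) (hlip i) (x i) c
  rwa [← neg_sub (x i) c, inner_neg_right, norm_neg, ← sub_eq_add_neg] at hi

end Descent

section Young

variable {ι E : Type*} [Fintype ι] [NormedAddCommGroup E] [InnerProductSpace ℝ E]
  {κ : ℝ} {g e : ι → E}

theorem neg_sum_inner_le_of_sum_norm_sq_le (hκ : 0 < κ)
    (he : ∑ i, ‖e i‖ ^ 2 ≤ κ * -∑ i, ⟪g i, e i⟫) :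
    -∑ i, ⟪g i, e i⟫ ≤ κ * ∑ i, ‖g i‖ ^ 2 := by
  have hyoung : 0 ≤ κ ^ 2 * ∑ i, ‖g i‖ ^ 2 + 2 * κ * ∑ i, ⟪g i, e i⟫ + ∑ i, ‖e i‖ ^ 2 := by
    simp only [Finset.mul_sum, ← Finset.sum_add_distrib]
    refine Finset.sum_nonneg fun i _ => (sq_nonneg ‖κ • g i + e i‖).trans_eq ?_
    rw [norm_add_sq_real, norm_smul, real_inner_smul_left, mul_pow, Real.norm_eq_abs, sq_abs]
    ring
  refine le_of_mul_le_mul_left ?_ hκ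
  linarith

theorem sum_norm_sq_le_sq_mul_of_sum_norm_sq_le (hκ : 0 < κ)
    (he : ∑ i, ‖e i‖ ^ 2 ≤ κ * -∑ i, ⟪g i, e i⟫) :
    ∑ i, ‖e i‖ ^ 2 ≤ κ ^ 2 * ∑ i, ‖g i‖ ^ 2 :=
  calc ∑ i, ‖e i‖ ^ 2 ≤ κ * -∑ i, ⟪g i, e i⟫ := he
    _ ≤ κ * (κ * ∑ i, ‖g i‖ ^ 2) := by gcongr; exact neg_sum_inner_le_of_sum_norm_sq_le hκ he
    _ = κ ^ 2 * ∑ i, ‖g i‖ ^ 2 := by ring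

end Young

section Average

variable {ι E : Type*} [Fintype ι] [AddCommGroup E] [Module ℝ E]

/-- The barycenter `x̄ = (1/n) ∑ᵢ xᵢ` of a finite family; it is `0` for the empty family. -/
noncomputable def average (x : ι → E) : E :=
  (Fintype.card ι : ℝ)⁻¹ • ∑ i, x i

theorem average_eq_sum_smul (x : ι → E) :
    average x = ∑ i, (Fintype.card ι : ℝ)⁻¹ • x i :=
  Finset.smul_sum

variable [Nonempty ι]

theorem sum_sub_average (x : ι → E) : ∑ i, (x i - average x) = 0 := by
  rw [Finset.sum_sub_distrib, Finset.sum_const, Finset.card_univ, ← Nat.cast_smul_eq_nsmul ℝ,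
    average, smul_inv_smul₀ (Nat.cast_ne_zero.2 Fintype.card_ne_zero), sub_self]

theorem sum_inv_card_eq_one : ∑ _i : ι, (Fintype.card ι : ℝ)⁻¹ = 1 := by
  simp

variable {C : Set E} {h : E → ℝ} {x : ι → E}

theorem average_mem_of_convex (hC : Convex ℝ C) (hx : ∀ i, x i ∈ C) : average x ∈ C := by
  rw [average_eq_sum_smul]
  exact hC.sum_mem (fun _ _ => by positivity) sum_inv_card_eq_one fun i _ => hx i

theorem card_mul_map_average_le_sum (hh : ConvexOn ℝ C h) (hx : ∀ i, x i ∈ C) :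
    Fintype.card ι * h (average x) ≤ ∑ i, h (x i) := by
  have hjensen := hh.map_sum_le (t := Finset.univ) (fun _ _ => by positivity)
    (sum_inv_card_eq_one (ι := ι)) fun i _ => hx i
  simp only [← average_eq_sum_smul, smul_eq_mul, ← Finset.mul_sum] at hjensen
  rwa [le_inv_mul_iff₀ (Nat.cast_pos.2 Fintype.card_pos)] at hjensen

end Average

section Consensus

variable {ι E : Type*} [Fintype ι] [NormedAddCommGroup E] [InnerProductSpace ℝ E]
  {W : ι → ι → ℝ} {β : ℝ}

/-- `⟨v, W v⟩ ≤ β ‖v‖²` for every `v ⟂ 𝟙`: for a symmetric stochastic `W`, its second largest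
eigenvalue is at most `β`. This is the one-sided part of `‖W v‖ ≤ β ‖v‖` on `𝟙ᗮ`. -/
def MeanZeroRayleighLE (W : ι → ι → ℝ) (β : ℝ) : Prop :=
  ∀ v : ι → ℝ, ∑ i, v i = 0 → ∑ i, v i * ∑ j, W i j * v j ≤ β * ∑ i, v i ^ 2

/-- The disagreement penalty `⟨x, (I - 𝐖) x⟩` of a stacked vector `x`, where `𝐖 = W ⊗ I`. -/
def disagreement (W : ι → ι → ℝ) (x : ι → E) : ℝ :=
  ∑ i, ⟪x i, x i - ∑ j, W i j • x j⟫

theorem meanZeroRayleighLE_of_sqrt_le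
    (hW : ∀ v : ι → ℝ, ∑ i, v i = 0 →
      √(∑ i, (∑ j, W i j * v j) ^ 2) ≤ β * √(∑ i, v i ^ 2)) :
    MeanZeroRayleighLE W β := fun v hv =>
  calc ∑ i, v i * ∑ j, W i j * v j
      ≤ √(∑ i, v i ^ 2) * √(∑ i, (∑ j, W i j * v j) ^ 2) := Real.sum_mul_le_sqrt_mul_sqrt _ _ _
    _ ≤ √(∑ i, v i ^ 2) * (β * √(∑ i, v i ^ 2)) := by gcongr; exact hW v hv
    _ = β * ∑ i, v i ^ 2 := by
      rw [mul_left_comm, Real.mul_self_sqrt (Finset.sum_nonneg fun _ _ => sq_nonneg _)]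

theorem MeanZeroRayleighLE.sum_inner_le_of_orthonormalBasis {κ : Type*} [Fintype κ]
    (hW : MeanZeroRayleighLE W β) (b : OrthonormalBasis κ ℝ E) {e : ι → E} (he : ∑ i, e i = 0) :
    ∑ i, ⟪e i, ∑ j, W i j • e j⟫ ≤ β * ∑ i, ‖e i‖ ^ 2 := by
  have hcoord (k : κ) : ∑ i, ⟪b k, e i⟫ = 0 := by rw [← inner_sum, he, inner_zero_right]
  calc ∑ i, ⟪e i, ∑ j, W i j • e j⟫
      = ∑ k, ∑ i, ⟪b k, e i⟫ * ∑ j, W i j * ⟪b k, e j⟫ := by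
        rw [Finset.sum_comm]
        refine Finset.sum_congr rfl fun i _ => ?_
        rw [← b.sum_inner_mul_inner]
        simp only [real_inner_comm (b _) (e i), inner_sum, real_inner_smul_right]
    _ ≤ ∑ k, β * ∑ i, ⟪b k, e i⟫ ^ 2 := Finset.sum_le_sum fun k _ => hW _ (hcoord k)
    _ = β * ∑ i, ‖e i‖ ^ 2 := by
        simp only [← Finset.mul_sum, ← b.sum_sq_inner_right]
        rw [Finset.sum_comm]

theorem MeanZeroRayleighLE.sum_inner_le (hW : MeanZeroRayleighLE W β) {e : ι → E}
    (he : ∑ i, e i = 0) : ∑ i, ⟪e i, ∑ j, W i j • e j⟫ ≤ β * ∑ i, ‖e i‖ ^ 2 := by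
  let S := Submodule.span ℝ (Set.range e)
  have : FiniteDimensional ℝ S := FiniteDimensional.span_of_finite ℝ (Set.finite_range e)
  let e' : ι → S := fun i => ⟨e i, Submodule.subset_span (Set.mem_range_self i)⟩
  have he' : ∑ i, e' i = 0 := Subtype.ext (by simpa [e'] using he)
  simpa [e'] using hW.sum_inner_le_of_orthonormalBasis (stdOrthonormalBasis ℝ S) he'

theorem MeanZeroRayleighLE.mul_sum_norm_sq_le_disagreement (hW : MeanZeroRayleighLE W β)
    {e : ι → E} (he : ∑ i, e i = 0) : (1 - β) * ∑ i, ‖e i‖ ^ 2 ≤ disagreement W e := by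
  simp only [disagreement, inner_sub_right, Finset.sum_sub_distrib, real_inner_self_eq_norm_sq]
  linarith [hW.sum_inner_le he]

theorem sub_const_sub_sum_smul_sub_const (hrow : ∀ i, ∑ j, W i j = 1) (x : ι → E) (c : E)
    (i : ι) :
    (x i - c) - ∑ j, W i j • (x j - c) = x i - ∑ j, W i j • x j := by
  simp only [smul_sub, Finset.sum_sub_distrib, ← Finset.sum_smul, hrow, one_smul]
  abel

theorem disagreement_const (hrow : ∀ i, ∑ j, W i j = 1) (z : E) :
    disagreement W (fun _ => z) = 0 := by
  simp [disagreement, ← Finset.sum_smul, hrow]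

theorem disagreement_sub_const (hrow : ∀ i, ∑ j, W i j = 1) (hcol : ∀ j, ∑ i, W i j = 1)
    (x : ι → E) (c : E) :
    disagreement W (fun i => x i - c) = disagreement W x := by
  have hresidual : ∑ i, (x i - ∑ j, W i j • x j) = 0 := by
    rw [Finset.sum_sub_distrib, Finset.sum_comm]
    simp only [← Finset.sum_smul, hcol, one_smul, sub_self]
  simp only [disagreement, sub_const_sub_sum_smul_sub_const hrow]
  simp only [inner_sub_left, Finset.sum_sub_distrib, ← inner_sum, hresidual, inner_zero_right,
    sub_zero]

theorem MeanZeroRayleighLE.disagreement_nonneg [Nonempty ι] (hW : MeanZeroRayleighLE W β)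
    (hrow : ∀ i, ∑ j, W i j = 1) (hcol : ∀ j, ∑ i, W i j = 1) (hβ : β ≤ 1) (x : ι → E) :
    0 ≤ disagreement W x := by
  rw [← disagreement_sub_const hrow hcol x (average x)]
  exact (mul_nonneg (sub_nonneg.2 hβ) (Finset.sum_nonneg fun _ _ => sq_nonneg _)).trans
    (hW.mul_sum_norm_sq_le_disagreement (sum_sub_average x))

end Consensus

section Prox

variable {E : Type*} [NormedAddCommGroup E] [InnerProductSpace ℝ E] {C : Set E} {h : E → ℝ}
  {α : ℝ} {u p y : E}

theorem inner_le_add_mul_norm_sq_of_isMinOn_prox (hh : ConvexOn ℝ C h) (hα : 0 ≤ α)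
    (hmin : IsMinOn (fun z => α * h z + 1 / 2 * ‖z - u‖ ^ 2) C p) (hp : p ∈ C) (hy : y ∈ C)
    {t : ℝ} (ht₀ : 0 < t) (ht₁ : t ≤ 1) :
    ⟪p - u, p - y⟫ ≤ α * (h y - h p) + t * (1 / 2 * ‖y - p‖ ^ 2) := by
  have ht₁' : 0 ≤ 1 - t := sub_nonneg.2 ht₁
  have hsum : t + (1 - t) = 1 := add_sub_cancel t 1
  have hle : α * h p + 1 / 2 * ‖p - u‖ ^ 2 ≤
      α * h (t • y + (1 - t) • p) + 1 / 2 * ‖t • y + (1 - t) • p - u‖ ^ 2 :=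
    hmin (hh.1 hy hp ht₀.le ht₁' hsum)
  have hconv : α * h (t • y + (1 - t) • p) ≤ α * (t * h y + (1 - t) * h p) :=
    mul_le_mul_of_nonneg_left (hh.2 hy hp ht₀.le ht₁' hsum) hα
  have hexpand : ‖t • y + (1 - t) • p - u‖ ^ 2 =
      ‖p - u‖ ^ 2 - 2 * t * ⟪p - u, p - y⟫ + t ^ 2 * ‖y - p‖ ^ 2 := by
    rw [show t • y + (1 - t) • p - u = (p - u) - t • (p - y) by module, norm_sub_sq_real,
      norm_smul, real_inner_smul_right, mul_pow, Real.norm_eq_abs, sq_abs, norm_sub_rev p y]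
    ring
  refine le_of_mul_le_mul_left ?_ ht₀
  linarith

theorem inner_le_of_isMinOn_prox (hh : ConvexOn ℝ C h) (hα : 0 ≤ α)
    (hmin : IsMinOn (fun z => α * h z + 1 / 2 * ‖z - u‖ ^ 2) C p) (hp : p ∈ C) (hy : y ∈ C) :
    ⟪p - u, p - y⟫ ≤ α * (h y - h p) := by
  have hlim : Filter.Tendsto (fun t : ℝ => α * (h y - h p) + t * (1 / 2 * ‖y - p‖ ^ 2))
      (nhdsWithin 0 (Set.Ioi 0)) (nhds (α * (h y - h p))) := by
    refine Filter.Tendsto.mono_left ?_ nhdsWithin_le_nhds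
    exact Continuous.tendsto' (by fun_prop) _ _ (by simp)
  refine ge_of_tendsto hlim ?_
  filter_upwards [Ioc_mem_nhdsGT (zero_lt_one (α := ℝ))] with t ht
  exact inner_le_add_mul_norm_sq_of_isMinOn_prox hh hα hmin hp hy ht.1 ht.2

end Prox

section FixedPoint

variable {ι E : Type*} [Fintype ι] [Nonempty ι] [NormedAddCommGroup E] [InnerProductSpace ℝ E]
  {C : Set E} {h : E → ℝ} {W : ι → ι → ℝ} {α β : ℝ} {x g : ι → E}

theorem disagreement_sub_average_le_of_prox_fixedPoint (hh : ConvexOn ℝ C h)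
    (hrow : ∀ i, ∑ j, W i j = 1) (hα : 0 ≤ α) (hx : ∀ i, x i ∈ C)
    (hfix : ∀ i, IsMinOn
      (fun y => α * h y + 1 / 2 * ‖y - (∑ j, W i j • x j - α • g i)‖ ^ 2) C (x i)) :
    disagreement W (fun i => x i - average x) ≤ α * -∑ i, ⟪g i, x i - average x⟫ := by
  have hvar (i : ι) : ⟪x i - average x, x i - ∑ j, W i j • x j⟫ + α * ⟪g i, x i - average x⟫ ≤
      α * (h (average x) - h (x i)) := by
    have := inner_le_of_isMinOn_prox hh hα (hfix i) (hx i) (average_mem_of_convex hh.1 hx)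
    rwa [← sub_add, inner_add_left, real_inner_smul_left, real_inner_comm] at this
  have hsum := Finset.sum_le_sum fun i (_ : i ∈ Finset.univ) => hvar i
  rw [Finset.sum_add_distrib, ← Finset.mul_sum, ← Finset.mul_sum, Finset.sum_sub_distrib,
    Finset.sum_const, Finset.card_univ, nsmul_eq_mul] at hsum
  have hjensen : α * (Fintype.card ι * h (average x) - ∑ i, h (x i)) ≤ 0 :=
    mul_nonpos_of_nonneg_of_nonpos hα (sub_nonpos.2 (card_mul_map_average_le_sum hh hx))
  simp only [disagreement, sub_const_sub_sum_smul_sub_const hrow]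
  linarith

theorem sum_norm_sq_sub_average_le_of_prox_fixedPoint (hh : ConvexOn ℝ C h)
    (hrow : ∀ i, ∑ j, W i j = 1) (hW : MeanZeroRayleighLE W β) (hβ : β < 1) (hα : 0 ≤ α)
    (hx : ∀ i, x i ∈ C)
    (hfix : ∀ i, IsMinOn
      (fun y => α * h y + 1 / 2 * ‖y - (∑ j, W i j • x j - α • g i)‖ ^ 2) C (x i)) :
    ∑ i, ‖x i - average x‖ ^ 2 ≤ α / (1 - β) * -∑ i, ⟪g i, x i - average x⟫ := by
  rw [div_mul_eq_mul_div, le_div_iff₀' (sub_pos.2 hβ)]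
  exact (hW.mul_sum_norm_sq_le_disagreement (sum_sub_average x)).trans
    (disagreement_sub_average_le_of_prox_fixedPoint hh hrow hα hx hfix)

theorem sum_add_average_le_of_prox_fixedPoint [CompleteSpace E] {f : ι → E → ℝ}
    {f' : ι → E → E} {L : ℝ} (hgrad : ∀ i x, HasGradientAt (f i) (f' i x) x)
    (hlip : ∀ i x y, ‖f' i x - f' i y‖ ≤ L * ‖x - y‖) (hh : ConvexOn ℝ C h)
    (hrow : ∀ i, ∑ j, W i j = 1) (hW : MeanZeroRayleighLE W β) (hβ : β < 1) (hα : 0 < α)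
    (hx : ∀ i, x i ∈ C)
    (hfix : ∀ i, IsMinOn
      (fun y => α * h y + 1 / 2 * ‖y - (∑ j, W i j • x j - α • f' i (x i))‖ ^ 2) C (x i)) :
    ∑ i, (f i (average x) + h (average x)) ≤ ∑ i, (f i (x i) + h (x i)) +
      (α / (1 - β) + L * α ^ 2 / (2 * (1 - β) ^ 2)) * ∑ i, ‖f' i (x i)‖ ^ 2 := by
  have hκ : 0 < α / (1 - β) := div_pos hα (sub_pos.2 hβ)
  have henergy := sum_norm_sq_sub_average_le_of_prox_fixedPoint hh hrow hW hβ hα.le hx hfix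
  have hfirst := neg_sum_inner_le_of_sum_norm_sq_le hκ henergy
  have hsecond : L * ∑ i, ‖x i - average x‖ ^ 2 ≤
      L * ((α / (1 - β)) ^ 2 * ∑ i, ‖f' i (x i)‖ ^ 2) := by
    cases subsingleton_or_nontrivial E
    · simp [norm_of_subsingleton]
    · exact mul_le_mul_of_nonneg_left (sum_norm_sq_le_sq_mul_of_sum_norm_sq_le hκ henergy)
        (nonneg_of_norm_sub_le_mul (hlip (Classical.arbitrary ι)))
  have hdescent := sum_le_sub_sum_inner_add_sum_norm_sq hgrad hlip x (average x)
  have hjensen := card_mul_map_average_le_sum hh hx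
  have hconst : L * α ^ 2 / (2 * (1 - β) ^ 2) = L / 2 * (α / (1 - β)) ^ 2 := by
    rw [div_pow, div_mul_div_comm]
  rw [Finset.sum_add_distrib, Finset.sum_add_distrib, Finset.sum_const, Finset.card_univ,
    nsmul_eq_mul, hconst]
  linarith

end FixedPoint

section ExtendedReal

theorem coe_finsetSum_ereal {ι : Type*} (s : Finset ι) (a : ι → ℝ) :
    ((∑ i ∈ s, a i : ℝ) : EReal) = ∑ i ∈ s, (a i : EReal) :=
  map_sum (⟨⟨Real.toEReal, EReal.coe_zero⟩, EReal.coe_add⟩ : ℝ →+ EReal) a s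

theorem finsetSum_ereal_eq_top {ι : Type*} {s : Finset ι} {a : ι → EReal}
    (hbot : ∀ i ∈ s, a i ≠ ⊥) {i : ι} (hi : i ∈ s) (htop : a i = ⊤) : ∑ i ∈ s, a i = ⊤ := by
  classical
  rw [← Finset.add_sum_erase s a hi, htop]
  refine EReal.top_add_of_ne_bot (Finset.sum_induction a (· ≠ ⊥) (fun _ _ ha hb => ?_)
    EReal.zero_ne_bot fun j hj => hbot j (Finset.mem_of_mem_erase hj))
  exact EReal.add_ne_bot_iff.2 ⟨ha, hb⟩

variable {ι E : Type*} [Fintype ι] {h : E → EReal}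

/-- The composite objective `F(x) = ∑ᵢ (fᵢ(xᵢ) + h(xᵢ))` of a stacked vector `x`, with values in
`EReal` since `h` may take the value `+∞`. -/
noncomputable def compositeObjective (f : ι → E → ℝ) (h : E → EReal) (x : ι → E) : EReal :=
  ∑ i, ((f i (x i) : EReal) + h (x i))

theorem compositeObjective_eq_coe (hbot : ∀ x, h x ≠ ⊥) (f : ι → E → ℝ) {x : ι → E}
    (hx : ∀ i, h (x i) ≠ ⊤) :
    compositeObjective f h x = ((∑ i, (f i (x i) + (h (x i)).toReal) : ℝ) : EReal) := by
  rw [compositeObjective, coe_finsetSum_ereal]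
  exact Finset.sum_congr rfl fun i _ => by
    rw [EReal.coe_add, EReal.coe_toReal (hx i) (hbot _)]

theorem ne_top_of_compositeObjective_ne_top (hbot : ∀ x, h x ≠ ⊥) {f : ι → E → ℝ}
    {x : ι → E} (hx : compositeObjective f h x ≠ ⊤) (i : ι) : h (x i) ≠ ⊤ := fun htop =>
  hx (finsetSum_ereal_eq_top (fun j _ => EReal.add_ne_bot_iff.2 ⟨EReal.coe_ne_bot _, hbot _⟩)
    (Finset.mem_univ i) (by rw [htop, EReal.coe_add_top]))

theorem isMinOn_toReal_of_isMinOn (hbot : ∀ x, h x ≠ ⊥) {α : ℝ} {φ : E → ℝ} {p : E}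
    (hmin : IsMinOn (fun y => (α : EReal) * h y + (φ y : EReal)) Set.univ p) (hp : h p ≠ ⊤) :
    IsMinOn (fun y => α * (h y).toReal + φ y) {y | h y ≠ ⊤} p := fun y hy => by
  have hle : (α : EReal) * h p + (φ p : EReal) ≤ (α : EReal) * h y + (φ y : EReal) :=
    hmin (Set.mem_univ y)
  rw [← EReal.coe_toReal hp (hbot p), ← EReal.coe_toReal hy (hbot y)] at hle
  exact_mod_cast hle

end ExtendedReal

theorem ProperClosedConvex.convexOn_toReal {d : ℕ} {h : EuclideanSpace ℝ (Fin d) → EReal}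
    (hh : ProperClosedConvex h) : ConvexOn ℝ {x | h x ≠ ⊤} fun x => (h x).toReal := by
  obtain ⟨-, hbot, -, hconv⟩ := hh
  have hle : ∀ x, h x ≠ ⊤ → ∀ y, h y ≠ ⊤ → ∀ a b : ℝ, 0 ≤ a → 0 ≤ b → a + b = 1 →
      h (a • x + b • y) ≤ ((a * (h x).toReal + b * (h y).toReal : ℝ) : EReal) := by
    intro x hx y hy a b ha hb hab
    obtain rfl : b = 1 - a := eq_sub_of_add_eq' hab
    have hxy := hconv x y a ha (sub_nonneg.1 hb)
    rw [← EReal.coe_toReal hx (hbot x), ← EReal.coe_toReal hy (hbot y)] at hxy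
    exact_mod_cast hxy
  have hdom : Convex ℝ {x | h x ≠ ⊤} := fun x hx y hy a b ha hb hab =>
    ne_top_of_le_ne_top (EReal.coe_ne_top _) (hle x hx y hy a b ha hb hab)
  refine ⟨hdom, fun x hx y hy a b ha hb hab => ?_⟩
  rw [← EReal.coe_le_coe_iff, EReal.coe_toReal (hdom hx hy ha hb hab) (hbot _)]
  exact hle x hx y hy a b ha hb hab

section General

variable {ι E : Type*} [Fintype ι] [Nonempty ι] [NormedAddCommGroup E] [InnerProductSpace ℝ E]
  {f : ι → E → ℝ} {h : E → EReal} {W : ι → ι → ℝ} {α β : ℝ} {x : ι → E}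

theorem compositeObjective_average_le_of_prox_fixedPoint [CompleteSpace E] {f' : ι → E → E}
    {L : ℝ} (hgrad : ∀ i x, HasGradientAt (f i) (f' i x) x)
    (hlip : ∀ i x y, ‖f' i x - f' i y‖ ≤ L * ‖x - y‖) (hbot : ∀ x, h x ≠ ⊥)
    (hconv : ConvexOn ℝ {x | h x ≠ ⊤} fun x => (h x).toReal) (hrow : ∀ i, ∑ j, W i j = 1)
    (hW : MeanZeroRayleighLE W β) (hβ : β < 1) (hα : 0 < α)
    (hfix : ∀ i, IsMinOn (fun y => (α : EReal) * h y +
      ((1 / 2 * ‖y - (∑ j, W i j • x j - α • f' i (x i))‖ ^ 2 : ℝ) : EReal)) Set.univ (x i)) :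
    compositeObjective f h (fun _ => average x) ≤ compositeObjective f h x +
      (((α / (1 - β) + L * α ^ 2 / (2 * (1 - β) ^ 2)) * ∑ i, ‖f' i (x i)‖ ^ 2 : ℝ) : EReal) := by
  by_cases htop : compositeObjective f h x = ⊤
  · rw [htop, EReal.top_add_coe]
    exact le_top
  have hx := ne_top_of_compositeObjective_ne_top hbot htop
  rw [compositeObjective_eq_coe hbot f hx,
    compositeObjective_eq_coe hbot f fun _ => average_mem_of_convex hconv.1 hx, ← EReal.coe_add,
    EReal.coe_le_coe_iff]
  exact sum_add_average_le_of_prox_fixedPoint hgrad hlip hconv hrow hW hβ hα hx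
    fun i => isMinOn_toReal_of_isMinOn hbot (hfix i) (hx i)

theorem compositeObjective_le_consensus_of_penalized_min (hrow : ∀ i, ∑ j, W i j = 1)
    (hcol : ∀ j, ∑ i, W i j = 1) (hW : MeanZeroRayleighLE W β) (hβ : β ≤ 1) (hα : 0 < α)
    (hmin : ∀ y, compositeObjective f h x + ((1 / (2 * α) * disagreement W x : ℝ) : EReal) ≤
      compositeObjective f h y + ((1 / (2 * α) * disagreement W y : ℝ) : EReal)) (z : E) :
    compositeObjective f h x ≤ compositeObjective f h fun _ => z := by
  have hpenalty : 0 ≤ 1 / (2 * α) * disagreement W x :=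
    mul_nonneg (by positivity) (hW.disagreement_nonneg hrow hcol hβ x)
  have hz := hmin fun _ => z
  rw [disagreement_const hrow, mul_zero, EReal.coe_zero, add_zero] at hz
  exact (le_add_of_nonneg_right (EReal.coe_nonneg.2 hpenalty)).trans hz

theorem stmt6_general [CompleteSpace E] {f' : ι → E → E} {L : ℝ}
    (hgrad : ∀ i x, HasGradientAt (f i) (f' i x) x)
    (hlip : ∀ i x y, ‖f' i x - f' i y‖ ≤ L * ‖x - y‖) (hbot : ∀ x, h x ≠ ⊥)
    (hconv : ConvexOn ℝ {x | h x ≠ ⊤} fun x => (h x).toReal) (hrow : ∀ i, ∑ j, W i j = 1)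
    (hcol : ∀ j, ∑ i, W i j = 1) (hW : MeanZeroRayleighLE W β) (hβ : β < 1) (hα : 0 < α)
    (hmin : ∀ y, compositeObjective f h x + ((1 / (2 * α) * disagreement W x : ℝ) : EReal) ≤
      compositeObjective f h y + ((1 / (2 * α) * disagreement W y : ℝ) : EReal))
    (hfix : ∀ i, IsMinOn (fun y => (α : EReal) * h y +
      ((1 / 2 * ‖y - (∑ j, W i j • x j - α • f' i (x i))‖ ^ 2 : ℝ) : EReal)) Set.univ (x i))
    (z : E) :
    compositeObjective f h (fun _ => average x) ≤ compositeObjective f h (fun _ => z) +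
      (((α / (1 - β) + L * α ^ 2 / (2 * (1 - β) ^ 2)) * ∑ i, ‖f' i (x i)‖ ^ 2 : ℝ) : EReal) := by
  refine (compositeObjective_average_le_of_prox_fixedPoint hgrad hlip hbot hconv hrow hW hβ hα
    hfix).trans (add_le_add_left ?_ _)
  exact compositeObjective_le_consensus_of_penalized_min hrow hcol hW hβ.le hα hmin z

end General

/-- **Lemma 2, eq. (5), identical regularizers.** If `x⋆` both minimizes
the penalized problem and is a fixed point of synchronous Prox-DGD with the single
regularizer `h`, then
`F(𝐱̄⋆) ≤ Fopt + (α/(1−β) + Lα²/(2(1−β)²))·‖g⋆‖²` with `g⋆ = (∇f₁(x⋆₁),…,∇fₙ(x⋆ₙ))`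
and `L = maxᵢ Lᵢ`. -/
theorem stmt6 (n d : ℕ) (hn : 0 < n)
    (f : Fin n → EuclideanSpace ℝ (Fin d) → ℝ)
    (f' : Fin n → EuclideanSpace ℝ (Fin d) → EuclideanSpace ℝ (Fin d))
    (hfconv : ∀ i, ConvexOn ℝ Set.univ (f i))
    (hgrad : ∀ i x, HasGradientAt (f i) (f' i x) x)
    (Li : Fin n → ℝ)
    (hlip : ∀ i x y, ‖f' i x - f' i y‖ ≤ Li i * ‖x - y‖)
    (L : ℝ) (hL : IsGreatest (Set.range Li) L)
    (h : EuclideanSpace ℝ (Fin d) → EReal)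
    (hh : ProperClosedConvex h)
    (W : Fin n → Fin n → ℝ)
    (hWsymm : ∀ i j, W i j = W j i)
    (hWnonneg : ∀ i j, 0 ≤ W i j)
    (hWstoch : ∀ i, ∑ j, W i j = 1)
    (β : ℝ) (hβ0 : 0 ≤ β) (hβ1 : β < 1)
    (hWspec : ∀ v : Fin n → ℝ, (∑ i, v i) = 0 →
      Real.sqrt (∑ i, (∑ j, W i j * v j) ^ 2) ≤ β * Real.sqrt (∑ i, v i ^ 2))
    (α : ℝ) (hα : 0 < α)
    -- the consensus problem has an optimal solution, with (finite) optimal value `Fopt`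
    (zstar : EuclideanSpace ℝ (Fin d)) (Fopt : ℝ)
    (hzopt : ∀ z : EuclideanSpace ℝ (Fin d),
      (∑ i, (((f i zstar : ℝ) : EReal) + h zstar))
        ≤ ∑ i, (((f i z : ℝ) : EReal) + h z))
    (hFopt : (∑ i, (((f i zstar : ℝ) : EReal) + h zstar)) = ((Fopt : ℝ) : EReal))
    (xstar : Fin n → EuclideanSpace ℝ (Fin d))
    -- `x⋆` minimizes the penalized problem (so that `F(x⋆) ≤ Fopt`)
    (hxstar : ∀ x : Fin n → EuclideanSpace ℝ (Fin d),
      (∑ i, (((f i (xstar i) : ℝ) : EReal) + h (xstar i)))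
          + ((1 / (2 * α) * ∑ i, ⟪xstar i, xstar i - (∑ j, W i j • xstar j)⟫ : ℝ) : EReal)
        ≤ (∑ i, (((f i (x i) : ℝ) : EReal) + h (x i)))
          + ((1 / (2 * α) * ∑ i, ⟪x i, x i - (∑ j, W i j • x j)⟫ : ℝ) : EReal))
    -- and `x⋆` satisfies the Prox-DGD fixed-point equations
    (hfix : ∀ i, IsProxPt α h
      ((∑ j, W i j • xstar j) - α • f' i (xstar i)) (xstar i)) :
    (∑ i, (((f i ((n : ℝ)⁻¹ • ∑ j, xstar j) : ℝ) : EReal) + h ((n : ℝ)⁻¹ • ∑ j, xstar j)))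
      ≤ ((Fopt : ℝ) : EReal)
        + (((α / (1 - β) + L * α ^ 2 / (2 * (1 - β) ^ 2))
            * ∑ i, ‖f' i (xstar i)‖ ^ 2 : ℝ) : EReal) := by
  have : NeZero n := ⟨hn.ne'⟩
  rw [← hFopt]
  simpa only [compositeObjective, average, Fintype.card_fin] using
    stmt6_general hgrad (fun i x y => (hlip i x y).trans (by gcongr; exact hL.2 ⟨i, rfl⟩))
      hh.2.1 hh.convexOn_toReal hWstoch
      (fun j => (Finset.sum_congr rfl fun i _ => hWsymm i j).trans (hWstoch j))
      (meanZeroRayleighLE_of_sqrt_le hWspec) hβ1 hα hxstar (fun i y _ => hfix i y) zstar
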